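/- The fundamental tone of hyperbolic n-space satisfies λ*(ℍⁿ(-1)) = (n-1)²/4. -/

import Mathlib

open MeasureTheory

/-- The height (last coordinate) `x_n` of a point of `ℝⁿ`, used for the upper
half-space model of hyperbolic space. -/
noncomputable def height (n : ℕ) (x : EuclideanSpace ℝ (Fin n)) : ℝ :=
  if h : 0 < n then x ⟨n - 1, by omega⟩ else 0

/-- The upper half-space `{x ∈ ℝⁿ : x_n > 0}`, the underlying set of the
half-space model of hyperbolic `n`-space `ℍⁿ(-1)` with metric `g = x_n⁻² δ`. -/
def upperHalfSpace (n : ℕ) : Set (EuclideanSpace ℝ (Fin n)) :=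
  {x | 0 < height n x}

/-- The fundamental tone `λ*(ℍⁿ(-1))` of hyperbolic `n`-space, computed in the
upper half-space model: the infimum of the Rayleigh quotients
`∫ |∇u|²_g dvol_g / ∫ u² dvol_g` over smooth nonzero compactly supported functions
`u` with support in the half-space, where `|∇u|²_g = x_n² |∇u|²` and
`dvol_g = x_n⁻ⁿ dx`. -/
noncomputable def hyperbolicFundamentalTone (n : ℕ) : ℝ :=
  sInf {r | ∃ u : EuclideanSpace ℝ (Fin n) → ℝ,
    ContDiff ℝ (⊤ : ℕ∞) u ∧ HasCompactSupport u ∧ tsupport u ⊆ upperHalfSpace n ∧ u ≠ 0 ∧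
    r = (∫ x in upperHalfSpace n,
          (height n x) ^ 2 * ‖gradient u x‖ ^ 2 * (height n x) ^ (-(n : ℝ))) /
        (∫ x in upperHalfSpace n, (u x) ^ 2 * (height n x) ^ (-(n : ℝ)))}

/-!
Put `a = (s - 1) / 2` and substitute `u = x_kᵃ w` in the Rayleigh quotient for the metric `x_k⁻² δ`
and the volume `x_k⁻ˢ dx`. The mass becomes `∫ x_k⁻¹ w²`, and the energy becomes
`a² ∫ x_k⁻¹ w² + ∫ x_k ‖∇w‖²`: the cross term `2a ∫ w ∂_k w` vanishes because `w` has compact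
support. Hence every quotient is at least `a²`.

The bound is sharp because `∫ x_k ‖∇w‖²` can be made arbitrarily small relative to `∫ x_k⁻¹ w²`.
Take `w = F(x_k) ∏_{j ≠ k} χ(x_j)` with `F(t) = ψ(log t)`: then `∫ t F'² = ∫ ψ'²` and
`∫ t⁻¹ F² = ∫ ψ²`, so only one-dimensional quotients `∫ χ'² / ∫ χ²` on the line remain, and
dilation makes these as small as desired. The function `χ` is chosen after `ψ`, which
compensates for the factor `∫ t F²`.
-/

open Set Function TopologicalSpace
open scoped ContDiff Distributions Gradient

section TestFunctions

variable {E : Type*} [NormedAddCommGroup E] [NormedSpace ℝ E] {Ω : Opens E}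

lemma contDiff_of_tsupport {F : Type*} [NormedAddCommGroup F] [NormedSpace ℝ F] {f : E → F}
    {m : WithTop ℕ∞} (hf : ∀ x ∈ tsupport f, ContDiffAt ℝ m f x) : ContDiff ℝ m f := by
  rw [contDiff_iff_contDiffAt]
  intro x
  by_cases hx : x ∈ tsupport f
  · exact hf x hx
  · exact contDiffAt_const.congr_of_eventuallyEq (notMem_tsupport_iff_eventuallyEq.1 hx)

lemma testFunction_eq_zero (u : 𝓓(Ω, ℝ)) {x : E} (hx : x ∉ Ω) : u x = 0 :=
  image_eq_zero_of_notMem_tsupport fun h => hx (u.tsupport_subset h)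

lemma fderiv_testFunction_eq_zero (u : 𝓓(Ω, ℝ)) {x : E} (hx : x ∉ Ω) : fderiv ℝ u x = 0 :=
  fderiv_of_notMem_tsupport ℝ fun h => hx (u.tsupport_subset h)

/-- The product of a test function on `Ω` with a function that is smooth on `Ω` only; the values
of the latter outside `Ω` are irrelevant. -/
noncomputable def smoothMul (f : E → ℝ) (hf : ContDiffOn ℝ ∞ f Ω) (u : 𝓓(Ω, ℝ)) : 𝓓(Ω, ℝ) where
  toFun x := f x * u x
  contDiff' := contDiff_of_tsupport fun _ hx =>
    (hf.contDiffAt (Ω.isOpen.mem_nhds (u.tsupport_subset (tsupport_mul_subset_right hx)))).mul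
      u.contDiff.contDiffAt
  hasCompactSupport' := u.hasCompactSupport.mul_left
  tsupport_subset' := tsupport_mul_subset_right.trans u.tsupport_subset

variable {ρ : E → ℝ}

lemma continuous_mul_testFunction_sq (hρ : ContinuousOn ρ Ω) (u : 𝓓(Ω, ℝ)) :
    Continuous fun x => ρ x * u x ^ 2 := by
  have hsupp : tsupport (fun x => ρ x * u x ^ 2) ⊆ Ω := by
    simp only [sq, ← mul_assoc]
    exact tsupport_mul_subset_right.trans u.tsupport_subset
  exact (hρ.mul (u.continuous.pow 2).continuousOn).continuous_of_tsupport_subset Ω.isOpen hsupp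

lemma hasCompactSupport_mul_testFunction_sq (ρ : E → ℝ) (u : 𝓓(Ω, ℝ)) :
    HasCompactSupport fun x => ρ x * u x ^ 2 := by
  simp only [sq, ← mul_assoc]
  exact u.hasCompactSupport.mul_left

variable [MeasurableSpace E] [BorelSpace E] {μ : Measure E}

lemma integrable_mul_testFunction_sq [IsFiniteMeasureOnCompacts μ] (hρ : ContinuousOn ρ Ω)
    (u : 𝓓(Ω, ℝ)) :
    Integrable (fun x => ρ x * u x ^ 2) μ :=
  (continuous_mul_testFunction_sq hρ u).integrable_of_hasCompactSupport
    (hasCompactSupport_mul_testFunction_sq ρ u)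

lemma integral_mul_testFunction_sq_pos [IsFiniteMeasureOnCompacts μ] [μ.IsOpenPosMeasure]
    (hρ : ContinuousOn ρ Ω) (hpos : ∀ x ∈ Ω, 0 < ρ x) {u : 𝓓(Ω, ℝ)} (hu : u ≠ 0) :
    0 < ∫ x, ρ x * u x ^ 2 ∂μ := by
  obtain ⟨x, hx⟩ := DFunLike.ne_iff.1 hu
  have hxΩ : x ∈ Ω := not_imp_comm.1 (testFunction_eq_zero u) hx
  refine (continuous_mul_testFunction_sq hρ u).integral_pos_of_hasCompactSupport_nonneg_nonzero
    (x := x) (hasCompactSupport_mul_testFunction_sq ρ u) (fun y => ?_)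
    (mul_ne_zero (hpos x hxΩ).ne' (pow_ne_zero 2 hx))
  by_cases hy : y ∈ Ω
  · exact mul_nonneg (hpos y hy).le (sq_nonneg _)
  · simp [testFunction_eq_zero u hy]

lemma integrable_mul_fderiv_self [IsFiniteMeasureOnCompacts μ] {u : E → ℝ} (hu : ContDiff ℝ 1 u)
    (hc : HasCompactSupport u) (v : E) : Integrable (fun x => u x * fderiv ℝ u x v) μ :=
  (hu.continuous.mul ((hu.continuous_fderiv one_ne_zero).clm_apply
    continuous_const)).integrable_of_hasCompactSupport hc.mul_right

lemma integral_mul_fderiv_self_eq_zero [FiniteDimensional ℝ E] [μ.IsAddHaarMeasure] {u : E → ℝ}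
    (hu : ContDiff ℝ 1 u) (hc : HasCompactSupport u) (v : E) :
    ∫ x, u x * fderiv ℝ u x v ∂μ = 0 := by
  have hd := hu.differentiable one_ne_zero
  have hint := integrable_mul_fderiv_self (μ := μ) hu hc v
  have hparts := integral_mul_fderiv_eq_neg_fderiv_mul_of_integrable (by simpa only [mul_comm])
    hint ((hu.continuous.mul hu.continuous).integrable_of_hasCompactSupport hc.mul_right)
    (fun x _ => hd x) (fun x _ => hd x)
  simp only [mul_comm (fderiv ℝ u _ v)] at hparts
  linarith

end TestFunctions

section GroundState

variable {ι : Type*}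

/-- The half-space `{x : x_k > 0}` as an open set, the domain of the test functions. -/
def coordHalfSpace (k : ι) : Opens (EuclideanSpace ℝ ι) where
  carrier := {x | 0 < x k}
  is_open' := isOpen_lt continuous_const (by fun_prop)

lemma continuousOn_coord_inv (k : ι) :
    ContinuousOn (fun x : EuclideanSpace ℝ ι => (x k)⁻¹) (coordHalfSpace k) :=
  ContinuousOn.inv₀ (by fun_prop) fun _ hx => ne_of_gt hx

variable [Fintype ι]

/-- The Dirichlet energy of `u` on the half-space, for the metric `x_k⁻² δ` and the volume
`x_k⁻ˢ dx`; the hyperbolic volume is the case where `s` is the dimension. -/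
noncomputable def weightedEnergy (k : ι) (s : ℝ) (u : EuclideanSpace ℝ ι → ℝ) : ℝ :=
  ∫ x in (coordHalfSpace k : Set (EuclideanSpace ℝ ι)), x k ^ 2 * ‖∇ u x‖ ^ 2 * x k ^ (-s)

/-- The squared `L²` norm of `u` on the half-space for the volume `x_k⁻ˢ dx`. -/
noncomputable def weightedMass (k : ι) (s : ℝ) (u : EuclideanSpace ℝ ι → ℝ) : ℝ :=
  ∫ x in (coordHalfSpace k : Set (EuclideanSpace ℝ ι)), u x ^ 2 * x k ^ (-s)

variable {k : ι}

lemma contDiffOn_coord_rpow (k : ι) (a : ℝ) :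
    ContDiffOn ℝ ∞ (fun x : EuclideanSpace ℝ ι => x k ^ a) (coordHalfSpace k) := fun _ hx =>
  ((EuclideanSpace.proj (𝕜 := ℝ) k).contDiff.contDiffAt.rpow_const_of_ne
    (ne_of_gt hx)).contDiffWithinAt

/-- The ground state transform `w ↦ x_kᵃ w`. -/
noncomputable def rpowMul (k : ι) (a : ℝ) (w : 𝓓(coordHalfSpace k, ℝ)) :
    𝓓(coordHalfSpace k, ℝ) :=
  smoothMul (fun x => x k ^ a) (contDiffOn_coord_rpow k a) w

lemma rpowMul_apply (a : ℝ) (w : 𝓓(coordHalfSpace k, ℝ)) (x : EuclideanSpace ℝ ι) :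
    rpowMul k a w x = x k ^ a * w x := rfl

lemma rpowMul_rpowMul_neg (a : ℝ) (u : 𝓓(coordHalfSpace k, ℝ)) :
    rpowMul k a (rpowMul k (-a) u) = u := by
  ext x
  by_cases hx : x ∈ coordHalfSpace k
  · rw [rpowMul_apply, rpowMul_apply, ← mul_assoc, ← Real.rpow_add hx, add_neg_cancel,
      Real.rpow_zero, one_mul]
  · rw [testFunction_eq_zero _ hx, testFunction_eq_zero u hx]

lemma rpowMul_ne_zero (a : ℝ) {w : 𝓓(coordHalfSpace k, ℝ)} (hw : w ≠ 0) :
    rpowMul k a w ≠ 0 := by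
  contrapose! hw
  rw [← rpowMul_rpowMul_neg (-a) w, neg_neg, hw]
  ext x
  simp [rpowMul_apply]

lemma rpow_sq_mul_rpow_neg {y : ℝ} (hy : 0 < y) (a : ℝ) :
    (y ^ a) ^ 2 * y ^ (-(2 * a + 1)) = y⁻¹ := by
  rw [← Real.rpow_mul_natCast hy.le, ← Real.rpow_add hy, ← Real.rpow_neg_one]
  congr 1
  push_cast
  ring

lemma weightedMass_rpowMul (a : ℝ) (w : 𝓓(coordHalfSpace k, ℝ)) :
    weightedMass k (2 * a + 1) (rpowMul k a w) = ∫ x, (x k)⁻¹ * w x ^ 2 := by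
  have hpoint : ∀ x ∈ coordHalfSpace k,
      rpowMul k a w x ^ 2 * x k ^ (-(2 * a + 1)) = (x k)⁻¹ * w x ^ 2 := by
    intro x hx
    rw [rpowMul_apply, ← rpow_sq_mul_rpow_neg hx a]
    ring
  rw [weightedMass, setIntegral_congr_fun (coordHalfSpace k).isOpen.measurableSet hpoint,
    setIntegral_eq_integral_of_forall_compl_eq_zero]
  intro x hx
  simp [testFunction_eq_zero w hx]

lemma norm_gradient_sq_eq_sum [DecidableEq ι] (u : EuclideanSpace ℝ ι → ℝ)
    (x : EuclideanSpace ℝ ι) :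
    ‖∇ u x‖ ^ 2 = ∑ i, fderiv ℝ u x (EuclideanSpace.single i 1) ^ 2 := by
  rw [EuclideanSpace.real_norm_sq_eq]
  refine Finset.sum_congr rfl fun i _ => ?_
  rw [← inner_gradient_left, EuclideanSpace.inner_single_right]
  simp

lemma integrable_coord_mul_fderiv_sq (w : 𝓓(coordHalfSpace k, ℝ)) (v : EuclideanSpace ℝ ι) :
    Integrable fun x => x k * fderiv ℝ w x v ^ 2 := by
  have hcont : Continuous (fderiv ℝ w) := w.contDiff.continuous_fderiv (by simp)
  simp only [sq, ← mul_assoc]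
  exact Continuous.integrable_of_hasCompactSupport (by fun_prop)
    (w.hasCompactSupport.fderiv_apply ℝ v).mul_left

lemma integrable_coord_mul_norm_gradient_sq (w : 𝓓(coordHalfSpace k, ℝ)) :
    Integrable fun x => x k * ‖∇ w x‖ ^ 2 := by
  classical
  simp only [norm_gradient_sq_eq_sum, Finset.mul_sum]
  exact integrable_finsetSum _ fun i _ => integrable_coord_mul_fderiv_sq w _

lemma hasGradientAt_coord_rpow_mul [DecidableEq ι] (a : ℝ) {w : EuclideanSpace ℝ ι → ℝ}
    {x : EuclideanSpace ℝ ι} (hw : DifferentiableAt ℝ w x) (hx : 0 < x k) :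
    HasGradientAt (fun y => y k ^ a * w y)
      (x k ^ a • (∇ w x + (a * (x k)⁻¹ * w x) • EuclideanSpace.single k 1)) x := by
  have hcoord := (EuclideanSpace.proj (𝕜 := ℝ) k).hasFDerivAt (x := x)
  have hprod := (hcoord.rpow_const (p := a) (Or.inl hx.ne')).mul hw.hasFDerivAt
  rw [hasGradientAt_iff_hasFDerivAt]
  refine hprod.congr_fderiv ?_
  ext v
  have hpow : x k ^ (a - 1) = x k ^ a * (x k)⁻¹ := by
    rw [Real.rpow_sub_one hx.ne', div_eq_mul_inv]
  simp only [PiLp.proj_apply, hpow, add_apply, smul_apply, smul_eq_mul, smul_add, map_add, map_smul,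
    toDual_gradient, InnerProductSpace.toDual_apply_apply, EuclideanSpace.inner_single_left,
    Real.ringHom_apply, one_mul, add_right_inj]
  ring

lemma norm_gradient_coord_rpow_mul_sq [DecidableEq ι] (a : ℝ) {w : EuclideanSpace ℝ ι → ℝ}
    {x : EuclideanSpace ℝ ι} (hw : DifferentiableAt ℝ w x) (hx : 0 < x k) :
    ‖∇ (fun y : EuclideanSpace ℝ ι => y k ^ a * w y) x‖ ^ 2 =
      (x k ^ a) ^ 2 * (‖∇ w x‖ ^ 2
        + 2 * (a * (x k)⁻¹ * w x) * fderiv ℝ w x (EuclideanSpace.single k 1)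
        + (a * (x k)⁻¹ * w x) ^ 2) := by
  rw [(hasGradientAt_coord_rpow_mul a hw hx).gradient, norm_smul, mul_pow, norm_add_sq_real,
    inner_smul_right, inner_gradient_left, norm_smul, PiLp.norm_single]
  simp only [Real.norm_eq_abs, sq_abs, norm_one, mul_one, mul_assoc]

theorem weightedEnergy_rpowMul (a : ℝ) (w : 𝓓(coordHalfSpace k, ℝ)) :
    weightedEnergy k (2 * a + 1) (rpowMul k a w) =
      a ^ 2 * (∫ x, (x k)⁻¹ * w x ^ 2) + ∫ x, x k * ‖∇ w x‖ ^ 2 := by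
  classical
  let e : EuclideanSpace ℝ ι := EuclideanSpace.single k 1
  have hpoint : ∀ x ∈ coordHalfSpace k,
      x k ^ 2 * ‖∇ (rpowMul k a w) x‖ ^ 2 * x k ^ (-(2 * a + 1)) =
        a ^ 2 * ((x k)⁻¹ * w x ^ 2) + 2 * a * (w x * fderiv ℝ w x e)
          + x k * ‖∇ w x‖ ^ 2 := by
    intro x hx
    have hxk : 0 < x k := hx
    have hw : DifferentiableAt ℝ w x := w.contDiff.differentiable (by simp) x
    calc _ = ((x k ^ a) ^ 2 * x k ^ (-(2 * a + 1))) * (x k ^ 2 * (‖∇ w x‖ ^ 2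
              + 2 * (a * (x k)⁻¹ * w x) * fderiv ℝ w x e + (a * (x k)⁻¹ * w x) ^ 2)) := by
            rw [funext (rpowMul_apply a w), norm_gradient_coord_rpow_mul_sq a hw hxk]
            ring
      _ = _ := by
            rw [rpow_sq_mul_rpow_neg hxk]
            field_simp
            ring
  have hmass : Integrable fun x => a ^ 2 * ((x k)⁻¹ * w x ^ 2) :=
    (integrable_mul_testFunction_sq (continuousOn_coord_inv k) w).const_mul _
  have hcross : Integrable fun x => 2 * a * (w x * fderiv ℝ w x e) :=
    (integrable_mul_fderiv_self (w.contDiff.of_le (by simp)) w.hasCompactSupport e).const_mul _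
  rw [weightedEnergy, setIntegral_congr_fun (coordHalfSpace k).isOpen.measurableSet hpoint,
    setIntegral_eq_integral_of_forall_compl_eq_zero]
  · rw [integral_add (by exact hmass.add hcross) (integrable_coord_mul_norm_gradient_sq w),
      integral_add hmass hcross, integral_const_mul, integral_const_mul,
      integral_mul_fderiv_self_eq_zero (w.contDiff.of_le (by simp)) w.hasCompactSupport,
      mul_zero, add_zero]
  · intro x hx
    simp [testFunction_eq_zero w hx, fderiv_testFunction_eq_zero w hx, gradient]

lemma weightedMass_pos (s : ℝ) {u : 𝓓(coordHalfSpace k, ℝ)} (hu : u ≠ 0) :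
    0 < weightedMass k s u := by
  obtain ⟨a, rfl⟩ : ∃ a, s = 2 * a + 1 := ⟨(s - 1) / 2, by ring⟩
  rw [← rpowMul_rpowMul_neg a u, weightedMass_rpowMul]
  exact integral_mul_testFunction_sq_pos (continuousOn_coord_inv k) (fun x hx => inv_pos.2 hx)
    (rpowMul_ne_zero (-a) hu)

theorem hardy_inequality (s : ℝ) (u : 𝓓(coordHalfSpace k, ℝ)) :
    ((s - 1) / 2) ^ 2 * weightedMass k s u ≤ weightedEnergy k s u := by
  obtain ⟨a, rfl⟩ : ∃ a, s = 2 * a + 1 := ⟨(s - 1) / 2, by ring⟩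
  have hnonneg : 0 ≤ ∫ x, x k * ‖∇ (rpowMul k (-a) u) x‖ ^ 2 := by
    refine integral_nonneg fun x => ?_
    by_cases hx : x ∈ coordHalfSpace k
    · exact mul_nonneg (le_of_lt hx) (sq_nonneg _)
    · simp [fderiv_testFunction_eq_zero _ hx, gradient]
  rw [← rpowMul_rpowMul_neg a u, weightedMass_rpowMul, weightedEnergy_rpowMul,
    add_sub_cancel_right, mul_div_cancel_left₀ a two_ne_zero]
  exact le_add_of_nonneg_right hnonneg

end GroundState

section Line

lemma exists_testFunction_ne_zero : ∃ χ : 𝓓((⊤ : Opens ℝ), ℝ), χ ≠ 0 := by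
  let G : ContDiffBump (0 : ℝ) := ⟨1, 2, one_pos, one_lt_two⟩
  refine ⟨⟨G, G.contDiff, G.hasCompactSupport, subset_univ _⟩, DFunLike.ne_iff.2 ⟨0, ?_⟩⟩
  exact (G.pos_of_mem_ball (by simp [G.rOut_pos])).ne'

/-- The dilated test function `t ↦ χ (c t)`. -/
noncomputable def dilate {c : ℝ} (hc : c ≠ 0) (χ : 𝓓((⊤ : Opens ℝ), ℝ)) :
    𝓓((⊤ : Opens ℝ), ℝ) where
  toFun t := χ (c * t)
  contDiff' := χ.contDiff.comp (by fun_prop)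
  hasCompactSupport' := χ.hasCompactSupport.comp_homeomorph (Homeomorph.mulLeft₀ c hc)
  tsupport_subset' := subset_univ _

lemma dilate_apply {c : ℝ} (hc : c ≠ 0) (χ : 𝓓((⊤ : Opens ℝ), ℝ)) (t : ℝ) :
    dilate hc χ t = χ (c * t) := rfl

lemma dilate_ne_zero {c : ℝ} (hc : c ≠ 0) {χ : 𝓓((⊤ : Opens ℝ), ℝ)} (hχ : χ ≠ 0) :
    dilate hc χ ≠ 0 := by
  obtain ⟨t, ht⟩ := DFunLike.ne_iff.1 hχ
  refine DFunLike.ne_iff.2 ⟨c⁻¹ * t, ?_⟩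
  rwa [dilate_apply, mul_inv_cancel_left₀ hc]

lemma integral_dilate_sq {c : ℝ} (hc : c ≠ 0) (χ : 𝓓((⊤ : Opens ℝ), ℝ)) :
    ∫ t, dilate hc χ t ^ 2 = |c⁻¹| * ∫ t, χ t ^ 2 :=
  Measure.integral_comp_mul_left (fun t => χ t ^ 2) c

lemma integral_deriv_dilate_sq {c : ℝ} (hc : c ≠ 0) (χ : 𝓓((⊤ : Opens ℝ), ℝ)) :
    ∫ t, deriv (dilate hc χ) t ^ 2 = c ^ 2 * (|c⁻¹| * ∫ t, deriv χ t ^ 2) := by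
  rw [funext (dilate_apply hc χ)]
  simp only [deriv_comp_mul_left, smul_eq_mul, mul_pow, integral_const_mul]
  rw [Measure.integral_comp_mul_left (fun t => deriv χ t ^ 2), smul_eq_mul]

lemma integral_testFunction_sq_pos {χ : 𝓓((⊤ : Opens ℝ), ℝ)} (hχ : χ ≠ 0) :
    0 < ∫ t, χ t ^ 2 := by
  simpa only [one_mul] using integral_mul_testFunction_sq_pos (μ := volume) (ρ := fun _ => 1)
    continuousOn_const (fun _ _ => one_pos) hχ

lemma exists_integral_deriv_sq_le {ε : ℝ} (hε : 0 < ε) :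
    ∃ χ : 𝓓((⊤ : Opens ℝ), ℝ), χ ≠ 0 ∧ ∫ t, deriv χ t ^ 2 ≤ ε * ∫ t, χ t ^ 2 := by
  obtain ⟨χ, hχ⟩ := exists_testFunction_ne_zero
  obtain ⟨δ, hδ, hle⟩ :=
    exists_pos_mul_lt (mul_pos hε (integral_testFunction_sq_pos hχ)) (∫ t, deriv χ t ^ 2)
  have hc : √δ ≠ 0 := (Real.sqrt_pos.2 hδ).ne'
  refine ⟨dilate hc χ, dilate_ne_zero hc hχ, ?_⟩
  rw [integral_deriv_dilate_sq, integral_dilate_sq, Real.sq_sqrt hδ.le]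
  calc _ = |(√δ)⁻¹| * ((∫ t, deriv χ t ^ 2) * δ) := by ring
    _ ≤ |(√δ)⁻¹| * (ε * ∫ t, χ t ^ 2) := by gcongr
    _ = _ := by ring

lemma integral_id_mul_testFunction_sq_nonneg {χ : 𝓓((⊤ : Opens ℝ), ℝ)}
    (hχ : tsupport χ ⊆ Ioi 0) :
    0 ≤ ∫ t, t * χ t ^ 2 := by
  refine integral_nonneg fun t => ?_
  by_cases ht : t ∈ tsupport χ
  · exact mul_nonneg (le_of_lt (hχ ht)) (sq_nonneg _)
  · simp [image_eq_zero_of_notMem_tsupport ht]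

lemma integral_Ioi_inv_mul_comp_log (f : ℝ → ℝ) :
    ∫ t in Ioi 0, t⁻¹ * f (Real.log t) = ∫ s, f s := by
  have hsubst := integral_image_eq_integral_abs_deriv_smul MeasurableSet.univ
    (fun s _ => (Real.hasDerivAt_exp s).hasDerivWithinAt) Real.exp_injective.injOn
    (fun t => t⁻¹ * f (Real.log t))
  simpa [Set.image_univ, Real.range_exp, Real.exp_ne_zero] using hsubst

variable (χ : 𝓓((⊤ : Opens ℝ), ℝ))

lemma tsupport_indicator_comp_log_subset :
    tsupport ((Ioi 0).indicator fun t => χ (Real.log t)) ⊆ Real.exp '' tsupport χ := by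
  refine closure_minimal (fun t ht => ?_)
    (χ.hasCompactSupport.isCompact.image Real.continuous_exp).isClosed
  obtain ⟨ht0, hχ⟩ : 0 < t ∧ χ (Real.log t) ≠ 0 := by simpa using ht
  exact ⟨Real.log t, subset_tsupport _ hχ, Real.exp_log ht0⟩

lemma exp_image_subset_Ioi (s : Set ℝ) : Real.exp '' s ⊆ Ioi 0 :=
  image_subset_iff.2 fun t _ => Real.exp_pos t

lemma indicator_Ioi_eventuallyEq (f : ℝ → ℝ) {t : ℝ} (ht : 0 < t) :
    (Ioi 0).indicator f =ᶠ[nhds t] f :=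
  (eqOn_indicator).eventuallyEq_of_mem (Ioi_mem_nhds ht)

/-- The test function `t ↦ χ (log t)` on the positive half-line, extended by zero. -/
noncomputable def logPullback : 𝓓((⊤ : Opens ℝ), ℝ) where
  toFun := (Ioi 0).indicator fun t => χ (Real.log t)
  contDiff' := contDiff_of_tsupport fun t ht => by
    have ht0 : 0 < t := exp_image_subset_Ioi _ (tsupport_indicator_comp_log_subset χ ht)
    exact (χ.contDiff.contDiffAt.comp t (Real.contDiffAt_log.2 ht0.ne')).congr_of_eventuallyEq
      (indicator_Ioi_eventuallyEq _ ht0)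
  hasCompactSupport' := (χ.hasCompactSupport.isCompact.image Real.continuous_exp).of_isClosed_subset
    (isClosed_tsupport _) (tsupport_indicator_comp_log_subset χ)
  tsupport_subset' := subset_univ _

lemma logPullback_apply (t : ℝ) :
    logPullback χ t = (Ioi 0).indicator (fun t => χ (Real.log t)) t := rfl

lemma logPullback_ne_zero {χ : 𝓓((⊤ : Opens ℝ), ℝ)} (hχ : χ ≠ 0) : logPullback χ ≠ 0 := by
  obtain ⟨s, hs⟩ := DFunLike.ne_iff.1 hχ
  refine DFunLike.ne_iff.2 ⟨Real.exp s, ?_⟩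
  simpa [logPullback_apply, Real.exp_pos] using hs

lemma tsupport_logPullback_subset : tsupport (logPullback χ) ⊆ Ioi 0 :=
  (tsupport_indicator_comp_log_subset χ).trans (exp_image_subset_Ioi _)

lemma integral_inv_mul_logPullback_sq :
    ∫ t, t⁻¹ * logPullback χ t ^ 2 = ∫ s, χ s ^ 2 := by
  rw [← integral_Ioi_inv_mul_comp_log (fun s => χ s ^ 2), ← integral_indicator measurableSet_Ioi]
  congr 1 with t
  by_cases ht : 0 < t <;> simp [logPullback_apply, ht]

lemma deriv_logPullback {t : ℝ} (ht : 0 < t) :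
    deriv (logPullback χ) t = deriv χ (Real.log t) * t⁻¹ :=
  (indicator_Ioi_eventuallyEq (fun t => χ (Real.log t)) ht).deriv_eq.trans
    ((χ.contDiff.differentiable (by simp) _).hasDerivAt.comp t (Real.hasDerivAt_log ht.ne')).deriv

lemma integral_mul_deriv_logPullback_sq :
    ∫ t, t * deriv (logPullback χ) t ^ 2 = ∫ s, deriv χ s ^ 2 := by
  rw [← integral_Ioi_inv_mul_comp_log (fun s => deriv χ s ^ 2),
    ← setIntegral_eq_integral_of_forall_compl_eq_zero (s := Ioi 0)]
  · refine setIntegral_congr_fun measurableSet_Ioi fun t ht => ?_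
    have ht0 : t ≠ 0 := ne_of_gt ht
    simp only [deriv_logPullback χ ht]
    field_simp
  · intro t ht
    have hnot : t ∉ tsupport (logPullback χ) := fun h => ht (tsupport_logPullback_subset χ h)
    rw [image_eq_zero_of_notMem_tsupport fun h => hnot (tsupport_deriv_subset h)]
    simp

end Line

section TensorProduct

variable {ι : Type*} [Fintype ι]

lemma integral_prod_coord (f : ι → ℝ → ℝ) :
    ∫ x : EuclideanSpace ℝ ι, ∏ j, f j (x j) = ∏ j, ∫ t, f j t := by
  rw [← integral_fintype_prod_volume_eq_prod f]
  exact (PiLp.volume_preserving_ofLp ι).integral_comp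
    (MeasurableEquiv.toLp 2 (ι → ℝ)).symm.measurableEmbedding (fun x => ∏ j, f j (x j))

lemma tsupport_prod_coord_subset (g : ι → ℝ → ℝ) :
    tsupport (fun x : EuclideanSpace ℝ ι => ∏ j, g j (x j)) ⊆ {x | ∀ j, x j ∈ tsupport (g j)} := by
  refine closure_minimal (fun x hx j => subset_tsupport _ ?_) ?_
  · exact Finset.prod_ne_zero_iff.1 hx j (Finset.mem_univ j)
  · simp only [ofPred_forall]
    exact isClosed_iInter fun j => (isClosed_tsupport _).preimage (by fun_prop)

lemma hasCompactSupport_prod_coord {g : ι → ℝ → ℝ} (hg : ∀ j, HasCompactSupport (g j)) :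
    HasCompactSupport fun x : EuclideanSpace ℝ ι => ∏ j, g j (x j) := by
  have hbox : IsCompact {x : EuclideanSpace ℝ ι | ∀ j, x j ∈ tsupport (g j)} := by
    simpa [Set.pi, preimage, PiLp.homeomorph] using
      (PiLp.homeomorph 2 fun _ : ι => ℝ).isCompact_preimage.2 (isCompact_univ_pi hg)
  exact hbox.of_isClosed_subset (isClosed_tsupport _) (tsupport_prod_coord_subset g)

lemma integral_weight_mul_prod_coord_sq [DecidableEq ι] (k : ι) (m : ℝ → ℝ) (h : ι → ℝ → ℝ) :
    ∫ x : EuclideanSpace ℝ ι, m (x k) * (∏ j, h j (x j)) ^ 2 =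
      (∫ t, m t * h k t ^ 2) * ∏ j ∈ Finset.univ.erase k, ∫ t, h j t ^ 2 := by
  have hint := integral_prod_coord fun j t => (if j = k then m t else 1) * h j t ^ 2
  simp only [Finset.prod_mul_distrib, Finset.prod_ite_eq', Finset.prod_pow, Finset.mem_univ,
    if_true] at hint
  rw [hint, ← Finset.mul_prod_erase _ _ (Finset.mem_univ k)]
  simp only [if_true]
  congr 1
  refine Finset.prod_congr rfl fun j hj => ?_
  simp only [if_neg (Finset.ne_of_mem_erase hj), one_mul]

lemma fderiv_prod_coord_single [DecidableEq ι] {g : ι → ℝ → ℝ}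
    (hg : ∀ j, Differentiable ℝ (g j)) (i : ι) (x : EuclideanSpace ℝ ι) :
    fderiv ℝ (fun x : EuclideanSpace ℝ ι => ∏ j, g j (x j)) x (EuclideanSpace.single i 1) =
      ∏ j, update g i (deriv (g i)) j (x j) := by
  have hfactor : ∀ j ∈ Finset.univ, HasFDerivAt (fun x : EuclideanSpace ℝ ι => g j (x j))
      (deriv (g j) (x j) • (EuclideanSpace.proj j : EuclideanSpace ℝ ι →L[ℝ] ℝ)) x := fun j _ =>
    (hg j (x j)).hasDerivAt.comp_hasFDerivAt x (EuclideanSpace.proj (𝕜 := ℝ) j).hasFDerivAt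
  have hupdate : ∏ j ∈ Finset.univ.erase i, update g i (deriv (g i)) j (x j) =
      ∏ j ∈ Finset.univ.erase i, g j (x j) :=
    Finset.prod_congr rfl fun j hj => by rw [update_of_ne (Finset.ne_of_mem_erase hj)]
  rw [(HasFDerivAt.finsetProd hfactor).fderiv, ← Finset.mul_prod_erase _ _ (Finset.mem_univ i),
    hupdate, _root_.sum_apply, Finset.sum_eq_single i _ (by simp)]
  · simp [mul_comm]
  · intro j _ hj
    simp [hj]

variable {k : ι} (g : ι → 𝓓((⊤ : Opens ℝ), ℝ)) (hk : tsupport (g k) ⊆ Ioi 0)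

/-- The test function `x ↦ ∏ j, g j (x j)` on the half-space. -/
noncomputable def tensorProduct : 𝓓(coordHalfSpace k, ℝ) where
  toFun x := ∏ j, g j (x j)
  contDiff' := contDiff_prod fun j _ => (g j).contDiff.comp (by fun_prop)
  hasCompactSupport' := hasCompactSupport_prod_coord fun j => (g j).hasCompactSupport
  tsupport_subset' x hx := hk (tsupport_prod_coord_subset (fun j => g j) hx k)

lemma tensorProduct_ne_zero (hg : ∀ j, g j ≠ 0) : tensorProduct g hk ≠ 0 := by
  choose x hx using fun j => DFunLike.ne_iff.1 (hg j)
  exact DFunLike.ne_iff.2 ⟨WithLp.toLp 2 x, Finset.prod_ne_zero_iff.2 fun j _ => hx j⟩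

variable [DecidableEq ι]

lemma integral_inv_mul_tensorProduct_sq :
    ∫ x : EuclideanSpace ℝ ι, (x k)⁻¹ * tensorProduct g hk x ^ 2 =
      (∫ t, t⁻¹ * g k t ^ 2) * ∏ j ∈ Finset.univ.erase k, ∫ t, g j t ^ 2 :=
  integral_weight_mul_prod_coord_sq k (·⁻¹) fun j => g j

lemma integral_mul_fderiv_tensorProduct_sq (i : ι) :
    ∫ x : EuclideanSpace ℝ ι,
        x k * fderiv ℝ (tensorProduct g hk) x (EuclideanSpace.single i 1) ^ 2 =
      (∫ t, t * update (fun j => ⇑(g j)) i (deriv (g i)) k t ^ 2) *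
        ∏ j ∈ Finset.univ.erase k, ∫ t, update (fun j => ⇑(g j)) i (deriv (g i)) j t ^ 2 := by
  refine Eq.trans ?_ (integral_weight_mul_prod_coord_sq k (fun t => t) _)
  congr 1 with x
  exact congrArg (x k * · ^ 2)
    (fderiv_prod_coord_single (fun j => (g j).contDiff.differentiable (by simp)) i x)

lemma integral_mul_fderiv_tensorProduct_self_sq :
    ∫ x : EuclideanSpace ℝ ι,
        x k * fderiv ℝ (tensorProduct g hk) x (EuclideanSpace.single k 1) ^ 2 =
      (∫ t, t * deriv (g k) t ^ 2) * ∏ j ∈ Finset.univ.erase k, ∫ t, g j t ^ 2 := by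
  rw [integral_mul_fderiv_tensorProduct_sq, update_self]
  congr 1
  exact Finset.prod_congr rfl fun j hj => by rw [update_of_ne (Finset.ne_of_mem_erase hj)]

lemma integral_mul_fderiv_tensorProduct_of_ne_sq_le {δ : ℝ} {i : ι} (hi : i ≠ k)
    (hδ : ∫ t, deriv (g i) t ^ 2 ≤ δ * ∫ t, g i t ^ 2) :
    ∫ x : EuclideanSpace ℝ ι,
        x k * fderiv ℝ (tensorProduct g hk) x (EuclideanSpace.single i 1) ^ 2 ≤
      δ * (∫ t, t * g k t ^ 2) * ∏ j ∈ Finset.univ.erase k, ∫ t, g j t ^ 2 := by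
  have hmem : i ∈ Finset.univ.erase k := Finset.mem_erase.2 ⟨hi, Finset.mem_univ i⟩
  have hrest : ∀ j ∈ (Finset.univ.erase k).erase i,
      ∫ t, update (fun j => ⇑(g j)) i (deriv (g i)) j t ^ 2 = ∫ t, g j t ^ 2 := fun j hj => by
    rw [update_of_ne (Finset.ne_of_mem_erase hj)]
  have hfirst : 0 ≤ ∫ t, t * g k t ^ 2 := integral_id_mul_testFunction_sq_nonneg hk
  rw [integral_mul_fderiv_tensorProduct_sq, update_of_ne hi.symm, ← Finset.mul_prod_erase _ _ hmem,
    ← Finset.mul_prod_erase _ _ hmem, Finset.prod_congr rfl hrest, update_self]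
  calc _ ≤ (∫ t, t * g k t ^ 2) * ((δ * ∫ t, g i t ^ 2) *
        ∏ j ∈ (Finset.univ.erase k).erase i, ∫ t, g j t ^ 2) := by gcongr
    _ = _ := by ring

lemma integral_mul_norm_gradient_sq_eq_sum (w : 𝓓(coordHalfSpace k, ℝ)) :
    ∫ x, x k * ‖∇ w x‖ ^ 2 =
      ∑ i, ∫ x, x k * fderiv ℝ w x (EuclideanSpace.single i 1) ^ 2 := by
  simp only [norm_gradient_sq_eq_sum, Finset.mul_sum]
  exact integral_finsetSum _ fun i _ => integrable_coord_mul_fderiv_sq w _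

lemma integral_mul_norm_gradient_tensorProduct_sq_le {ε δ : ℝ}
    (hε : ∫ t, t * deriv (g k) t ^ 2 ≤ ε * ∫ t, t⁻¹ * g k t ^ 2)
    (hδ : ∀ i ≠ k, ∫ t, deriv (g i) t ^ 2 ≤ δ * ∫ t, g i t ^ 2) :
    ∫ x, x k * ‖∇ (tensorProduct g hk) x‖ ^ 2 ≤
      (ε * (∫ t, t⁻¹ * g k t ^ 2)
        + (Finset.univ.erase k).card * (δ * ∫ t, t * g k t ^ 2)) *
          ∏ j ∈ Finset.univ.erase k, ∫ t, g j t ^ 2 := by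
  rw [integral_mul_norm_gradient_sq_eq_sum, ← Finset.add_sum_erase _ _ (Finset.mem_univ k),
    integral_mul_fderiv_tensorProduct_self_sq, add_mul, mul_assoc (Nat.cast _), ← nsmul_eq_mul]
  refine add_le_add (by gcongr) (Finset.sum_le_card_nsmul _ _ _ fun i hi => ?_)
  have hik := Finset.ne_of_mem_erase hi
  exact integral_mul_fderiv_tensorProduct_of_ne_sq_le g hk hik (hδ i hik)

end TensorProduct

section FundamentalTone

variable {ι : Type*} [Fintype ι]

lemma exists_integral_mul_norm_gradient_sq_le (k : ι) {ε : ℝ} (hε : 0 < ε) :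
    ∃ w : 𝓓(coordHalfSpace k, ℝ), w ≠ 0 ∧
      ∫ x, x k * ‖∇ w x‖ ^ 2 ≤ ε * ∫ x, (x k)⁻¹ * w x ^ 2 := by
  classical
  obtain ⟨ψ, hψ, hψε⟩ := exists_integral_deriv_sq_le (half_pos hε)
  have hψpos := integral_testFunction_sq_pos hψ
  obtain ⟨δ, hδ, hsmall⟩ := exists_pos_mul_lt (mul_pos (half_pos hε) hψpos)
    ((Finset.univ.erase k).card * ∫ t, t * logPullback ψ t ^ 2)
  obtain ⟨χ, hχ, hχδ⟩ := exists_integral_deriv_sq_le hδ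
  let g : ι → 𝓓((⊤ : Opens ℝ), ℝ) := update (fun _ => χ) k (logPullback ψ)
  have hgk : g k = logPullback ψ := update_self ..
  have hg : ∀ i ≠ k, g i = χ := fun i hi => update_of_ne hi ..
  have hg0 : ∀ i, g i ≠ 0 :=
    (forall_update_iff (p := fun _ f => f ≠ 0) _).2 ⟨logPullback_ne_zero hψ, fun _ _ => hχ⟩
  have hsupp : tsupport (g k) ⊆ Ioi 0 := hgk ▸ tsupport_logPullback_subset ψ
  have hmass := integral_inv_mul_tensorProduct_sq g hsupp
  have henergy := integral_mul_norm_gradient_tensorProduct_sq_le g hsupp (ε := ε / 2) (δ := δ)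
    (by rwa [hgk, integral_mul_deriv_logPullback_sq, integral_inv_mul_logPullback_sq])
    (fun i hi => by rwa [hg i hi])
  rw [hgk, integral_inv_mul_logPullback_sq] at hmass henergy
  have hprod : 0 ≤ ∏ j ∈ Finset.univ.erase k, ∫ t, g j t ^ 2 :=
    Finset.prod_nonneg fun j _ => integral_nonneg fun t => sq_nonneg _
  refine ⟨tensorProduct g hsupp, tensorProduct_ne_zero g hsupp hg0, henergy.trans ?_⟩
  rw [hmass, ← mul_assoc ε]
  exact mul_le_mul_of_nonneg_right (by linarith) hprod

theorem hyperbolic_fundamental_tone_general (k : ι) (s : ℝ) :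
    IsGLB {r | ∃ u : 𝓓(coordHalfSpace k, ℝ), u ≠ 0 ∧ r = weightedEnergy k s u / weightedMass k s u}
      (((s - 1) / 2) ^ 2) := by
  constructor
  · rintro _ ⟨u, hu, rfl⟩
    exact (le_div_iff₀ (weightedMass_pos s hu)).2 (hardy_inequality s u)
  · intro b hb
    refine le_of_forall_pos_le_add fun ε hε => ?_
    obtain ⟨w, hw, hle⟩ := exists_integral_mul_norm_gradient_sq_le k hε
    obtain ⟨a, rfl⟩ : ∃ a, s = 2 * a + 1 := ⟨(s - 1) / 2, by ring⟩
    have hu := rpowMul_ne_zero a hw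
    refine (hb ⟨rpowMul k a w, hu, rfl⟩).trans ((div_le_iff₀ (weightedMass_pos _ hu)).2 ?_)
    rw [weightedEnergy_rpowMul, weightedMass_rpowMul, add_mul, add_sub_cancel_right,
      mul_div_cancel_left₀ a two_ne_zero]
    gcongr

lemma hyperbolicFundamentalTone_eq_sInf {n : ℕ} (k : Fin n) (hk : ∀ x, height n x = x k) :
    hyperbolicFundamentalTone n =
      sInf {r | ∃ u : 𝓓(coordHalfSpace k, ℝ),
        u ≠ 0 ∧ r = weightedEnergy k n u / weightedMass k n u} := by
  have hset : upperHalfSpace n = coordHalfSpace k := by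
    simp only [upperHalfSpace, hk]
    rfl
  simp only [hyperbolicFundamentalTone, weightedEnergy, weightedMass, hk, hset]
  congr 1 with r
  constructor
  · rintro ⟨u, hu, hc, hs, hne, rfl⟩
    exact ⟨⟨u, hu, hc, hs⟩, DFunLike.coe_injective.ne_iff.1 hne, rfl⟩
  · rintro ⟨u, hu, rfl⟩
    exact ⟨u, u.contDiff, u.hasCompactSupport, u.tsupport_subset, DFunLike.coe_injective.ne hu, rfl⟩

end FundamentalTone

/-- The fundamental tone of hyperbolic `n`-space satisfies
`λ*(ℍⁿ(-1)) = (n-1)²/4`. -/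
theorem hyperbolic_fundamental_tone (n : ℕ) (hn : 1 ≤ n) :
    hyperbolicFundamentalTone n = ((n : ℝ) - 1) ^ 2 / 4 := by
  obtain ⟨m, rfl⟩ := Nat.exists_eq_add_of_le' hn
  have hglb := hyperbolic_fundamental_tone_general (Fin.last m) ((m + 1 : ℕ) : ℝ)
  rw [hyperbolicFundamentalTone_eq_sInf (Fin.last m) fun x => dif_pos m.succ_pos,
    hglb.csInf_eq hglb.nonempty, div_pow]
  norm_num
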